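/- Suppose Φ = log(1 + |z_1|² + … + |z_n|² + Σ_{j} a_j |z^{m_j}|²) with a_j > 0 and |m_j| ≥ 2 satisfies det(∂²Φ/∂z_α∂z̄_β) = e^{−qΦ} for an integer q ≥ 1. Writing x_α = |z_α|², the identity is equivalent to a polynomial identity det(P·P_{αβ} x_β δ-structure terms) · … = P^{n+1−q} in the variables x_1,…,x_n; in particular, comparing degrees shows q ≤ n+1, with equality q = n+1 if and only if all a_j = 0 (the Fubini–Study case). -/

import Mathlib

open scoped BigOperators

/-- Wirtinger derivative `∂f/∂z_α`. -/
noncomputable def wD {n : ℕ} (f : (Fin n → ℂ) → ℂ) (α : Fin n) (z : Fin n → ℂ) : ℂ :=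
  (fderiv ℝ f z (Pi.single α 1) - Complex.I * fderiv ℝ f z (Pi.single α Complex.I)) / 2

/-- Conjugate Wirtinger derivative `∂f/∂z̄_α`. -/
noncomputable def wDbar {n : ℕ} (f : (Fin n → ℂ) → ℂ) (α : Fin n) (z : Fin n → ℂ) : ℂ :=
  (fderiv ℝ f z (Pi.single α 1) + Complex.I * fderiv ℝ f z (Pi.single α Complex.I)) / 2

/-- The matrix `g_{αβ̄} = ∂²Φ/∂z_α ∂z̄_β` of a Kähler metric with potential `Φ`. -/
noncomputable def kahlerMatrix {n : ℕ} (Φ : (Fin n → ℂ) → ℝ) (z : Fin n → ℂ) :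
    Matrix (Fin n) (Fin n) ℂ :=
  fun α β => wD (fun w => wDbar (fun v => (Φ v : ℂ)) β w) α z

/-! Let `P = ∑ |F_k|²` with the `F_k` holomorphic, and let `J` be the matrix of `1`-jets
`(F_k, ∂₁F_k, …, ∂ₙF_k)` at a point. The metric with potential `log P` is a Schur complement in the
Gram matrix `JᴴJ`, so `P^(n+1) det g = det JᴴJ`. For `F = (1, z, f)` the rows of `J` coming from
`(1, z)` form a unimodular matrix, and the rows coming from `f` can only increase the Gram
determinant, strictly so unless they vanish. Hence `det g = P^(-q)` gives `P^(n+1-q) ≥ 1`, with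
equality precisely when the `1`-jet of `f` vanishes; as `P > 1` away from the origin, a single point
off the coordinate hyperplanes decides both claims. -/

section GramDeterminant

open scoped ComplexOrder Matrix

theorem one_add_sum_le_prod_one_add {ι R : Type*} [CommSemiring R] [PartialOrder R]
    [IsOrderedRing R] (s : Finset ι) {f : ι → R} (hf : ∀ i ∈ s, 0 ≤ f i) :
    1 + ∑ i ∈ s, f i ≤ ∏ i ∈ s, (1 + f i) := by
  classical
  induction s using Finset.induction_on with
  | empty => simp
  | insert i s hi ih =>
    rw [Finset.forall_mem_insert] at hf
    calc 1 + ∑ j ∈ insert i s, f j = 1 + (f i + ∑ j ∈ s, f j) := by rw [Finset.sum_insert hi]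
      _ ≤ 1 + (f i + ∑ j ∈ s, f j) + f i * ∑ j ∈ s, f j :=
        le_add_of_nonneg_right (mul_nonneg hf.1 (Finset.sum_nonneg hf.2))
      _ = (1 + f i) * (1 + ∑ j ∈ s, f j) := by ring
      _ ≤ (1 + f i) * ∏ j ∈ s, (1 + f j) :=
        mul_le_mul_of_nonneg_left (ih hf.2) (add_nonneg zero_le_one hf.1)
      _ = ∏ j ∈ insert i s, (1 + f j) := by rw [Finset.prod_insert hi]

variable {𝕜 ι : Type*} [RCLike 𝕜] [Fintype ι] [DecidableEq ι]

theorem det_one_add_eq_prod_eigenvalues {M : Matrix ι ι 𝕜} (hM : M.IsHermitian) :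
    (1 + M).det = ∏ i, (1 + (hM.eigenvalues i : 𝕜)) := by
  have hchar : (-1 - M).det = ∏ i, (-1 - (hM.eigenvalues i : 𝕜)) := by
    have := M.eval_charpoly (-1)
    rw [hM.charpoly_eq] at this
    simpa [Polynomial.eval_prod, ← Matrix.diagonal_neg] using this.symm
  rw [← neg_neg (1 + M), neg_add', Matrix.det_neg, hchar, ← Finset.card_univ,
    ← Finset.prod_const, ← Finset.prod_mul_distrib]
  exact Finset.prod_congr rfl fun i _ => by ring

theorem one_add_trace_le_det_one_add {M : Matrix ι ι 𝕜} (hM : M.PosSemidef) :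
    1 + M.trace ≤ (1 + M).det := by
  rw [det_one_add_eq_prod_eigenvalues hM.1, hM.1.trace_eq_sum_eigenvalues]
  exact_mod_cast one_add_sum_le_prod_one_add Finset.univ fun i _ => hM.eigenvalues_nonneg i

theorem one_le_det_one_add {M : Matrix ι ι 𝕜} (hM : M.PosSemidef) : 1 ≤ (1 + M).det :=
  (le_add_of_nonneg_right hM.trace_nonneg).trans (one_add_trace_le_det_one_add hM)

theorem det_one_add_eq_one_iff {M : Matrix ι ι 𝕜} (hM : M.PosSemidef) :
    (1 + M).det = 1 ↔ M = 0 := by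
  refine ⟨fun h => hM.trace_eq_zero_iff.1 (hM.trace_nonneg.antisymm' ?_), fun h => by simp [h]⟩
  simpa [h] using one_add_trace_le_det_one_add hM

variable {κ : Type*} [Fintype κ]

theorem det_gram_fromRows {A : Matrix ι ι 𝕜} (hA : IsUnit A.det) (B : Matrix κ ι 𝕜) :
    ((A.fromRows B)ᴴ * A.fromRows B).det =
      (Aᴴ * A).det * (1 + (B * A⁻¹)ᴴ * (B * A⁻¹)).det := by
  have hfactor : A.fromRows B = Matrix.fromRows 1 (B * A⁻¹) * A := by
    rw [Matrix.fromRows_mul, Matrix.one_mul, Matrix.nonsing_inv_mul_cancel_right _ _ hA]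
  have hgram : (A.fromRows B)ᴴ * A.fromRows B = Aᴴ * (1 + (B * A⁻¹)ᴴ * (B * A⁻¹)) * A := by
    rw [hfactor, Matrix.conjTranspose_mul, ← Matrix.mul_assoc, Matrix.mul_assoc Aᴴ,
      Matrix.conjTranspose_fromRows_eq_fromCols_conjTranspose, Matrix.fromCols_mul_fromRows,
      Matrix.conjTranspose_one, Matrix.one_mul]
  rw [hgram, Matrix.det_mul, Matrix.det_mul, Matrix.det_mul]
  ring

theorem det_gram_le_det_gram_fromRows {A : Matrix ι ι 𝕜} (hA : IsUnit A.det)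
    (B : Matrix κ ι 𝕜) : (Aᴴ * A).det ≤ ((A.fromRows B)ᴴ * A.fromRows B).det := by
  rw [det_gram_fromRows hA]
  exact le_mul_of_one_le_right (Matrix.posSemidef_conjTranspose_mul_self A).det_nonneg
    (one_le_det_one_add (Matrix.posSemidef_conjTranspose_mul_self _))

theorem det_gram_fromRows_eq_det_gram_iff {A : Matrix ι ι 𝕜} (hA : IsUnit A.det)
    (B : Matrix κ ι 𝕜) : ((A.fromRows B)ᴴ * A.fromRows B).det = (Aᴴ * A).det ↔ B = 0 := by
  have hne : (Aᴴ * A).det ≠ 0 := by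
    simpa [Matrix.det_conjTranspose] using hA.ne_zero
  rw [det_gram_fromRows hA, mul_eq_left₀ hne,
    det_one_add_eq_one_iff (Matrix.posSemidef_conjTranspose_mul_self _),
    Matrix.conjTranspose_mul_self_eq_zero]
  refine ⟨fun h => ?_, fun h => by rw [h, Matrix.zero_mul]⟩
  rw [← Matrix.nonsing_inv_mul_cancel_right A B hA, h, Matrix.zero_mul]

theorem pow_mul_det_schurComplement {F : Type*} [Field F] (M : Matrix (Unit ⊕ ι) (Unit ⊕ ι) F)
    {p : F} (hp : M (.inl ()) (.inl ()) = p) (hp0 : p ≠ 0) :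
    p ^ (Fintype.card ι + 1) *
      (Matrix.of fun i j => M (.inr i) (.inr j) / p -
        M (.inr i) (.inl ()) * M (.inl ()) (.inr j) / p ^ 2).det = M.det := by
  have hcorner : M.toBlocks₁₁ = Matrix.of fun _ _ => p := by
    ext
    exact hp
  let _ : Invertible M.toBlocks₁₁ :=
    ⟨Matrix.of fun _ _ => p⁻¹, by ext; simp [hcorner, Matrix.mul_apply, hp0],
      by ext; simp [hcorner, Matrix.mul_apply, hp0]⟩
  have hinv : ⅟M.toBlocks₁₁ = Matrix.of fun _ _ => p⁻¹ := rfl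
  have hschur : M.toBlocks₂₂ - M.toBlocks₂₁ * ⅟M.toBlocks₁₁ * M.toBlocks₁₂ =
      p • Matrix.of fun i j => M (.inr i) (.inr j) / p -
        M (.inr i) (.inl ()) * M (.inl ()) (.inr j) / p ^ 2 := by
    ext i j
    simp only [hinv, Matrix.sub_apply, Matrix.smul_apply, Matrix.mul_apply, Matrix.of_apply,
      Finset.univ_unique, Finset.sum_singleton, smul_eq_mul, Matrix.toBlocks₂₂, Matrix.toBlocks₂₁,
      Matrix.toBlocks₁₂, PUnit.default_eq_unit]
    field_simp
  calc _ = p * (p • Matrix.of fun i j => M (.inr i) (.inr j) / p -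
          M (.inr i) (.inl ()) * M (.inl ()) (.inr j) / p ^ 2).det := by
        rw [Matrix.det_smul]
        ring
    _ = M.toBlocks₁₁.det * (M.toBlocks₂₂ - M.toBlocks₂₁ * ⅟M.toBlocks₁₁ * M.toBlocks₁₂).det := by
        rw [hschur, Matrix.det_unique M.toBlocks₁₁, hcorner, Matrix.of_apply]
    _ = M.det := by rw [← Matrix.det_fromBlocks₁₁, M.fromBlocks_toBlocks]

end GramDeterminant

section WirtingerDerivative

open scoped ComplexConjugate

variable {E : Type*} [NormedAddCommGroup E] [NormedSpace ℂ E]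

theorem apply_single_I {n : ℕ} (A : (Fin n → ℂ) →L[ℂ] ℂ) (α : Fin n) :
    A (Pi.single α Complex.I) = Complex.I * A (Pi.single α 1) := by
  rw [← smul_eq_mul, ← map_smul, ← Pi.single_smul, smul_eq_mul, mul_one]

/-- `f` is real differentiable at `z` with `∂f = A` and `∂̄f = conj ∘ B`. The antilinear part is
recorded through its conjugate `B`, so that both parts are `ℂ`-linear maps. -/
def HasWirtingerFDerivAt (f : E → ℂ) (A B : E →L[ℂ] ℂ) (z : E) : Prop :=
  HasFDerivAt f (A.restrictScalars ℝ +
    (Complex.conjCLE : ℂ →L[ℝ] ℂ).comp (B.restrictScalars ℝ)) z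

namespace HasWirtingerFDerivAt

section General

variable {f g : E → ℂ} {A B C D : E →L[ℂ] ℂ} {z : E}

theorem of_hasFDerivAt (hf : HasFDerivAt f A z) : HasWirtingerFDerivAt f A 0 z :=
  (hf.restrictScalars ℝ).congr_fderiv (by ext; simp)

theorem conj_comp (hf : HasWirtingerFDerivAt f A B z) :
    HasWirtingerFDerivAt (fun v => conj (f v)) B A z :=
  (Complex.conjCLE.hasFDerivAt.comp z hf).congr_fderiv (by ext; simp [add_comm])

theorem mul (hf : HasWirtingerFDerivAt f A B z) (hg : HasWirtingerFDerivAt g C D z) :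
    HasWirtingerFDerivAt (fun v => f v * g v) (f z • C + g z • A)
      (conj (f z) • D + conj (g z) • B) z :=
  (HasFDerivAt.mul hf hg).congr_fderiv (by ext; simp; ring)

theorem sum {κ : Type*} [Fintype κ] {f : κ → E → ℂ} {A B : κ → E →L[ℂ] ℂ}
    (hf : ∀ k, HasWirtingerFDerivAt (f k) (A k) (B k) z) :
    HasWirtingerFDerivAt (fun v => ∑ k, f k v) (∑ k, A k) (∑ k, B k) z :=
  (HasFDerivAt.fun_sum fun k _ => hf k).congr_fderiv
    (by ext; simp [Finset.sum_add_distrib])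

theorem holomorphic_comp {h : ℂ → ℂ} {h' : ℂ} (hf : HasWirtingerFDerivAt f A B z)
    (hh : HasDerivAt h h' (f z)) :
    HasWirtingerFDerivAt (fun v => h (f v)) (h' • A) (conj h' • B) z :=
  ((hh.hasFDerivAt.restrictScalars ℝ).comp z hf).congr_fderiv (by ext; simp; ring)

theorem sum_mul_conj {κ : Type*} [Fintype κ] {F G : κ → E → ℂ}
    (hF : ∀ k, DifferentiableAt ℂ (F k) z) (hG : ∀ k, DifferentiableAt ℂ (G k) z) :
    HasWirtingerFDerivAt (fun v => ∑ k, F k v * conj (G k v))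
      (∑ k, conj (G k z) • fderiv ℂ (F k) z) (∑ k, conj (F k z) • fderiv ℂ (G k) z) z :=
  HasWirtingerFDerivAt.sum fun k => by
    convert! (of_hasFDerivAt (hF k).hasFDerivAt).mul
      (of_hasFDerivAt (hG k).hasFDerivAt).conj_comp using 1 <;> ext <;> simp

end General

section Coordinates

variable {n : ℕ} {f : (Fin n → ℂ) → ℂ} {A B : (Fin n → ℂ) →L[ℂ] ℂ} {z : Fin n → ℂ}

theorem wD_eq (hf : HasWirtingerFDerivAt f A B z) (α : Fin n) :
    wD f α z = A (Pi.single α 1) := by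
  rw [wD, HasFDerivAt.fderiv hf]
  simp only [add_apply, ContinuousLinearMap.comp_apply,
    ContinuousLinearMap.coe_restrictScalars', ContinuousLinearEquiv.coe_coe,
    Complex.conjCLE_apply, apply_single_I, map_mul, Complex.conj_I]
  linear_combination (conj (B (Pi.single α 1)) - A (Pi.single α 1)) / 2 * Complex.I_mul_I

theorem wDbar_eq (hf : HasWirtingerFDerivAt f A B z) (α : Fin n) :
    wDbar f α z = conj (B (Pi.single α 1)) := by
  rw [wDbar, HasFDerivAt.fderiv hf]
  simp only [add_apply, ContinuousLinearMap.comp_apply,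
    ContinuousLinearMap.coe_restrictScalars', ContinuousLinearEquiv.coe_coe,
    Complex.conjCLE_apply, apply_single_I, map_mul, Complex.conj_I]
  linear_combination (A (Pi.single α 1) - conj (B (Pi.single α 1))) / 2 * Complex.I_mul_I

end Coordinates

end HasWirtingerFDerivAt

theorem wD_congr {n : ℕ} {f g : (Fin n → ℂ) → ℂ} {z : Fin n → ℂ} (h : f =ᶠ[nhds z] g)
    (α : Fin n) : wD f α z = wD g α z := by
  rw [wD, wD, h.fderiv_eq]

end WirtingerDerivative

section ProjectivelyInduced

open scoped ComplexConjugate Matrix Topology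

variable {n : ℕ} {K κ : Type*}

/-- The `1`-jets at `z` of a family `F` of functions on `ℂⁿ`: row `k` is
`(F_k(z), ∂₁F_k(z), …, ∂ₙF_k(z))`. -/
noncomputable def jetMatrix (F : K → (Fin n → ℂ) → ℂ) (z : Fin n → ℂ) :
    Matrix K (Unit ⊕ Fin n) ℂ :=
  Matrix.of fun k => Sum.elim (fun _ => F k z) fun i => fderiv ℂ (F k) z (Pi.single i 1)

theorem jetMatrix_sumElim (F : K → (Fin n → ℂ) → ℂ) (G : κ → (Fin n → ℂ) → ℂ) (z : Fin n → ℂ) :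
    jetMatrix (Sum.elim F G) z = (jetMatrix F z).fromRows (jetMatrix G z) := by
  ext (k | k) x <;> rfl

theorem jetMatrix_eq_zero_iff {F : K → (Fin n → ℂ) → ℂ} {z : Fin n → ℂ} :
    jetMatrix F z = 0 ↔ ∀ k, F k z = 0 ∧ fderiv ℂ (F k) z = 0 := by
  simp only [← Matrix.ext_iff, Sum.forall, jetMatrix, Matrix.of_apply, Sum.elim_inl, Sum.elim_inr,
    Matrix.zero_apply, forall_const, ← ContinuousLinearMap.coe_inj, LinearMap.pi_ext'_iff,
    LinearMap.ext_ring_iff]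
  rfl

variable [Fintype K] {F : K → (Fin n → ℂ) → ℂ} {z : Fin n → ℂ}

theorem sum_norm_sq_pos {V : Type*} [NormedAddCommGroup V] {w : K → V} (hw : ∃ k, w k ≠ 0) :
    0 < ∑ k, ‖w k‖ ^ 2 := by
  obtain ⟨k, hk⟩ := hw
  exact Finset.sum_pos' (fun _ _ => by positivity) ⟨k, Finset.mem_univ k, by positivity⟩

theorem ofReal_sum_norm_sq (w : K → ℂ) :
    ((∑ k, ‖w k‖ ^ 2 : ℝ) : ℂ) = ∑ k, w k * conj (w k) := by
  push_cast
  simp only [Complex.mul_conj']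

theorem wDbar_log_sum_norm_sq (hF : ∀ k, DifferentiableAt ℂ (F k) z) (hz : ∃ k, F k z ≠ 0)
    (β : Fin n) :
    wDbar (fun v => (Real.log (∑ k, ‖F k v‖ ^ 2) : ℂ)) β z =
      (∑ k, F k z * conj (fderiv ℂ (F k) z (Pi.single β 1))) / ∑ k, F k z * conj (F k z) := by
  have hslit : ∑ k, F k z * conj (F k z) ∈ Complex.slitPlane := by
    rw [← ofReal_sum_norm_sq]
    exact Complex.ofReal_mem_slitPlane.2 (sum_norm_sq_pos hz)
  have hlog : (fun v => (Real.log (∑ k, ‖F k v‖ ^ 2) : ℂ)) =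
      fun v => Complex.log (∑ k, F k v * conj (F k v)) := by
    funext v
    rw [Complex.ofReal_log (by positivity), ofReal_sum_norm_sq]
  rw [hlog, ((HasWirtingerFDerivAt.sum_mul_conj hF hF).holomorphic_comp
    (Complex.hasDerivAt_log hslit)).wDbar_eq]
  simp [div_eq_inv_mul]

theorem kahlerMatrix_log_sum_norm_sq (hF : ∀ k, ContDiffAt ℂ 2 (F k) z) (hz : ∃ k, F k z ≠ 0)
    (α β : Fin n) :
    kahlerMatrix (fun v => Real.log (∑ k, ‖F k v‖ ^ 2)) z α β =
      (∑ k, fderiv ℂ (F k) z (Pi.single α 1) * conj (fderiv ℂ (F k) z (Pi.single β 1))) /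
        (∑ k, F k z * conj (F k z)) -
      (∑ k, F k z * conj (fderiv ℂ (F k) z (Pi.single β 1))) *
        (∑ k, fderiv ℂ (F k) z (Pi.single α 1) * conj (F k z)) /
          (∑ k, F k z * conj (F k z)) ^ 2 := by
  have hF₁ : ∀ k, DifferentiableAt ℂ (F k) z := fun k => (hF k).differentiableAt (by norm_num)
  have hF₂ : ∀ k, DifferentiableAt ℂ (fun v => fderiv ℂ (F k) v (Pi.single β 1)) z := fun k =>
    (((hF k).fderiv_right (m := 1) (by norm_num)).differentiableAt (by norm_num)).clm_apply
      (differentiableAt_const _)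
  have hfirst : (fun w => wDbar (fun v => (Real.log (∑ k, ‖F k v‖ ^ 2) : ℂ)) β w) =ᶠ[𝓝 z]
      fun w => (∑ k, F k w * conj (fderiv ℂ (F k) w (Pi.single β 1))) *
        (∑ k, F k w * conj (F k w))⁻¹ := by
    have hdiff : ∀ᶠ w in 𝓝 z, ∀ k, DifferentiableAt ℂ (F k) w :=
      Filter.eventually_all.2 fun k => ((hF k).eventually (by norm_num)).mono fun w hw =>
        hw.differentiableAt (by norm_num)
    have hne : ∀ᶠ w in 𝓝 z, ∃ k, F k w ≠ 0 := by
      obtain ⟨k, hk⟩ := hz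
      exact ((hF k).continuousAt.eventually_ne hk).mono fun w hw => ⟨k, hw⟩
    filter_upwards [hdiff, hne] with w hdw hnw
    rw [wDbar_log_sum_norm_sq hdw hnw, div_eq_mul_inv]
  have hP : ∑ k, F k z * conj (F k z) ≠ 0 := by
    rw [← ofReal_sum_norm_sq]
    exact_mod_cast (sum_norm_sq_pos hz).ne'
  rw [kahlerMatrix, wD_congr hfirst, ((HasWirtingerFDerivAt.sum_mul_conj hF₁ hF₂).mul
    ((HasWirtingerFDerivAt.sum_mul_conj hF₁ hF₁).holomorphic_comp (hasDerivAt_inv hP))).wD_eq]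
  simp only [add_apply, smul_apply, sum_apply, smul_eq_mul, neg_mul, mul_neg]
  simp only [mul_comm]
  ring

theorem pow_mul_det_kahlerMatrix_log_sum_norm_sq (hF : ∀ k, ContDiffAt ℂ 2 (F k) z)
    (hz : ∃ k, F k z ≠ 0) :
    ((∑ k, ‖F k z‖ ^ 2 : ℝ) : ℂ) ^ (n + 1) *
      (kahlerMatrix (fun v => Real.log (∑ k, ‖F k v‖ ^ 2)) z).det =
        ((jetMatrix F z)ᴴ * jetMatrix F z).det := by
  have hcorner : ((jetMatrix F z)ᴴ * jetMatrix F z) (.inl ()) (.inl ()) =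
      ((∑ k, ‖F k z‖ ^ 2 : ℝ) : ℂ) := by
    rw [ofReal_sum_norm_sq]
    simp [Matrix.mul_apply, jetMatrix, mul_comm]
  rw [← pow_mul_det_schurComplement _ hcorner (by exact_mod_cast (sum_norm_sq_pos hz).ne'),
    Fintype.card_fin, ← Matrix.det_transpose]
  congr 2
  ext α β
  rw [Matrix.transpose_apply, kahlerMatrix_log_sum_norm_sq hF hz, ofReal_sum_norm_sq]
  simp [Matrix.mul_apply, jetMatrix, mul_comm]

end ProjectivelyInduced

section Graph

open scoped ComplexOrder Matrix

variable {n : ℕ} {κ : Type*} {f : κ → (Fin n → ℂ) → ℂ} {z : Fin n → ℂ}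

/-- The affine coordinates `(1, z₁, …, zₙ)`, as homogeneous coordinates of `ℂⁿ ⊆ ℂPⁿ`; their
potential `log ∑ ‖·‖²` is that of the Fubini–Study metric. -/
def affineCoord : Unit ⊕ Fin n → (Fin n → ℂ) → ℂ :=
  Sum.elim (fun _ _ => 1) fun i v => v i

theorem contDiff_affineCoord {r : WithTop ℕ∞} (k : Unit ⊕ Fin n) :
    ContDiff ℂ r (affineCoord k) := by
  rcases k with - | i
  · exact contDiff_const
  · exact contDiff_apply ℂ ℂ i

theorem det_jetMatrix_affineCoord (z : Fin n → ℂ) : (jetMatrix affineCoord z).det = 1 := by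
  have hblocks : jetMatrix affineCoord z = Matrix.fromBlocks 1 0 (Matrix.of fun i _ => z i) 1 := by
    ext (i | i) (j | j)
    · rfl
    · simp [jetMatrix, affineCoord]
    · rfl
    · simp [jetMatrix, affineCoord, Matrix.one_apply, Pi.single_apply,
        (hasFDerivAt_apply i z).fderiv]
  rw [hblocks, Matrix.det_fromBlocks_zero₁₂, Matrix.det_one, Matrix.det_one, one_mul]

variable [Fintype κ]

/-- The squared norm `P = 1 + ∑ |zᵢ|² + ∑ |f_k|²` of the homogeneous coordinates `(1, z, f(z))` on
the graph of `f`, so that `log P` is the potential of the Fubini–Study metric induced on it. -/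
noncomputable def graphNormSq (f : κ → (Fin n → ℂ) → ℂ) (z : Fin n → ℂ) : ℝ :=
  1 + ∑ i, ‖z i‖ ^ 2 + ∑ k, ‖f k z‖ ^ 2

theorem graphNormSq_eq_sum (f : κ → (Fin n → ℂ) → ℂ) (z : Fin n → ℂ) :
    graphNormSq f z = ∑ k, ‖(Sum.elim affineCoord f k : (Fin n → ℂ) → ℂ) z‖ ^ 2 := by
  simp [graphNormSq, affineCoord]

theorem one_lt_graphNormSq (f : κ → (Fin n → ℂ) → ℂ) (hz : z ≠ 0) : 1 < graphNormSq f z := by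
  have hcoord : 0 < ∑ i, ‖z i‖ ^ 2 := sum_norm_sq_pos (Function.ne_iff.1 hz)
  have hpert : 0 ≤ ∑ k, ‖f k z‖ ^ 2 := by positivity
  rw [graphNormSq]
  linarith

theorem pow_mul_det_kahlerMatrix_log_graphNormSq (hf : ∀ k, ContDiffAt ℂ 2 (f k) z) :
    (graphNormSq f z : ℂ) ^ (n + 1) *
      (kahlerMatrix (fun v => Real.log (graphNormSq f v)) z).det =
        (((jetMatrix affineCoord z).fromRows (jetMatrix f z))ᴴ *
          (jetMatrix affineCoord z).fromRows (jetMatrix f z)).det := by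
  simp only [graphNormSq_eq_sum, ← jetMatrix_sumElim]
  refine pow_mul_det_kahlerMatrix_log_sum_norm_sq ?_ ⟨.inl (.inl ()), one_ne_zero⟩
  rintro (k | k)
  · exact (contDiff_affineCoord k).contDiffAt
  · exact hf k

theorem one_le_pow_mul_det_kahlerMatrix (hf : ∀ k, ContDiffAt ℂ 2 (f k) z) :
    1 ≤ (graphNormSq f z : ℂ) ^ (n + 1) *
      (kahlerMatrix (fun v => Real.log (graphNormSq f v)) z).det := by
  have hdet := det_jetMatrix_affineCoord z
  have hle := det_gram_le_det_gram_fromRows (hdet ▸ isUnit_one) (jetMatrix f z)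
  rwa [Matrix.det_mul, Matrix.det_conjTranspose, hdet, star_one, one_mul,
    ← pow_mul_det_kahlerMatrix_log_graphNormSq hf] at hle

theorem pow_mul_det_kahlerMatrix_eq_one_iff (hf : ∀ k, ContDiffAt ℂ 2 (f k) z) :
    (graphNormSq f z : ℂ) ^ (n + 1) *
      (kahlerMatrix (fun v => Real.log (graphNormSq f v)) z).det = 1 ↔
        ∀ k, f k z = 0 ∧ fderiv ℂ (f k) z = 0 := by
  have hdet := det_jetMatrix_affineCoord z
  have hiff := det_gram_fromRows_eq_det_gram_iff (hdet ▸ isUnit_one) (jetMatrix f z)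
  rwa [Matrix.det_mul, Matrix.det_conjTranspose, hdet, star_one, one_mul,
    ← pow_mul_det_kahlerMatrix_log_graphNormSq hf, jetMatrix_eq_zero_iff] at hiff

theorem ofReal_pow_mul_exp_neg_mul_log {x : ℝ} (hx : 0 < x) (d : ℕ) (q : ℝ) :
    (x : ℂ) ^ d * Complex.exp (-(q : ℂ) * Real.log x) = ((x ^ ((d : ℝ) - q) : ℝ) : ℂ) := by
  rw [sub_eq_add_neg, Real.rpow_add hx, Real.rpow_natCast, Real.rpow_def_of_pos hx, mul_comm _ (-q)]
  push_cast
  rfl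

theorem le_and_eq_iff_of_det_kahlerMatrix_eq_exp (hf : ∀ k, ContDiffAt ℂ 2 (f k) z) (hz : z ≠ 0)
    {q : ℝ} (heq : (kahlerMatrix (fun v => Real.log (graphNormSq f v)) z).det =
      Complex.exp (-(q : ℂ) * Real.log (graphNormSq f z))) :
    q ≤ n + 1 ∧ (q = n + 1 ↔ ∀ k, f k z = 0 ∧ fderiv ℂ (f k) z = 0) := by
  have hP : 1 < graphNormSq f z := one_lt_graphNormSq f hz
  have hpow : (graphNormSq f z : ℂ) ^ (n + 1) *
      (kahlerMatrix (fun v => Real.log (graphNormSq f v)) z).det =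
        ((graphNormSq f z ^ ((n + 1 : ℕ) - q) : ℝ) : ℂ) := by
    rw [heq, ofReal_pow_mul_exp_neg_mul_log (by positivity)]
  have hle := one_le_pow_mul_det_kahlerMatrix hf
  have hiff := pow_mul_det_kahlerMatrix_eq_one_iff hf
  rw [hpow, ← Complex.ofReal_one, Complex.real_le_real, ← Real.rpow_zero,
    Real.rpow_le_rpow_left_iff hP] at hle
  rw [hpow, ← Complex.ofReal_one, Complex.ofReal_inj, ← Real.rpow_zero,
    Real.rpow_right_inj (by positivity) hP.ne'] at hiff
  push_cast at hle hiff
  exact ⟨sub_nonneg.1 hle, by rw [← hiff, sub_eq_zero, eq_comm]⟩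

end Graph

theorem stmt16_general {n : ℕ} (hn : 0 < n) {ι : Type*} [Fintype ι] {a : ι → ℝ}
    (m : ι → Fin n → ℕ) (ha : ∀ j, 0 ≤ a j) {Φ : (Fin n → ℂ) → ℝ}
    (hΦ : ∀ z, Φ z = Real.log (1 + ∑ i, ‖z i‖ ^ 2 + ∑ j, a j * ∏ i, ‖z i‖ ^ (2 * m j i)))
    {z : Fin n → ℂ} (hz : ∀ i, z i ≠ 0) {q : ℝ}
    (heq : (kahlerMatrix Φ z).det = Complex.exp (-(q : ℂ) * Φ z)) :
    q ≤ n + 1 ∧ (q = n + 1 ↔ ∀ j, a j = 0) := by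
  let f : ι → (Fin n → ℂ) → ℂ := fun j v => √(a j) * ∏ i, v i ^ m j i
  have hf : ∀ j, ContDiff ℂ 2 (f j) := fun j => by fun_prop
  have hnorm : ∀ j v, ‖f j v‖ ^ 2 = a j * ∏ i, ‖v i‖ ^ (2 * m j i) := fun j v => by
    simp [f, mul_pow, ha j, ← Finset.prod_pow, ← pow_mul, mul_comm]
  have hpot : Φ = fun v => Real.log (graphNormSq f v) := by
    funext v
    simp only [hΦ, graphNormSq, hnorm]
  have hz0 : z ≠ 0 := fun h => hz ⟨0, hn⟩ (congrFun h _)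
  have hjet : ∀ j, f j z = 0 ∧ fderiv ℂ (f j) z = 0 ↔ a j = 0 := fun j => by
    refine ⟨fun h => ?_, fun h => ?_⟩
    · simpa [f, Finset.prod_eq_zero_iff, hz, Real.sqrt_eq_zero (ha j)] using h.1
    · simp [f, h]
  subst hpot
  simpa only [hjet] using
    le_and_eq_iff_of_det_kahlerMatrix_eq_exp (fun j => (hf j).contDiffAt) hz0 heq

/-- if `Φ = log(1 + Σ|z_j|² + Σ a_j|z^{m_j}|²)` (with `a_j ≥ 0`, `|m_j| ≥ 2`)
satisfies `det(∂²Φ/∂z∂z̄) = e^{−qΦ}` for an integer `q ≥ 1`, then `q ≤ n+1`, with equality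
`q = n+1` if and only if all `a_j = 0` (the Fubini–Study case). -/
theorem stmt16 (n N : ℕ) (hn : 0 < n) (a : Fin N → ℝ) (m : Fin N → (Fin n → ℕ))
    (ha : ∀ j, 0 ≤ a j) (hm : Function.Injective m) (hdeg : ∀ j, 2 ≤ ∑ i, m j i)
    (Φ : (Fin n → ℂ) → ℝ)
    (hΦ : ∀ z, Φ z = Real.log (1 + ∑ j, ‖z j‖ ^ 2 +
      ∑ j, a j * ∏ i, ‖z i‖ ^ (2 * m j i)))
    (q : ℕ) (hq : 1 ≤ q)
    (heq : ∀ z, (kahlerMatrix Φ z).det = Complex.exp (-(q : ℂ) * Φ z)) :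
    q ≤ n + 1 ∧ (q = n + 1 ↔ ∀ j, a j = 0) := by
  simpa only [← Nat.cast_add_one, Nat.cast_le, Nat.cast_inj] using
    stmt16_general hn m ha hΦ (z := 1) (fun _ => one_ne_zero) (q := q) (by exact_mod_cast heq 1)
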